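/- arXiv:1208.2632 — 2 statements merged into one kernel-verified Lean document; each statement's English description precedes it below -/
import Mathlib

section
/- Let (T, Λ) be a cookie cutter system, let ψ : Λ → ℝ be Hölder continuous, write φ = −log|T'|, and fix α ∈ ℝ. Suppose ψ − αφ is not cohomologous to zero, i.e. there is no continuous h : Λ → ℝ with ψ − αφ = h∘T − h on Λ. Define S_{α,0} = { t ∈ ℝ : there exist a continuous function Φ : Λ → 2πℤ and a continuous h : Λ → ℝ such that t·(ψ − αφ) = Φ + h∘T − h on Λ }. Then S_{α,0} is a discrete subgroup of (ℝ, +); equivalently, there exists κ ≥ 0 such that S_{α,0} = κℤ. -/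
/-!
Write `f = ψ - αφ`, which is Hölder on the repeller `Λ`. The set `S_{α,0}` is a subgroup of `ℝ`, and
summing the defining equation along a periodic orbit `T^n x = x` shows `t · fⁿ(x) ∈ 2πℤ` for each of
its elements `t`. If some periodic sum `fⁿ(x)` is nonzero, this keeps the subgroup away from the
interval `(0, 2π / |fⁿ(x)|)`, so it is not dense and hence is cyclic.

Some periodic sum is indeed nonzero, because otherwise `f` would be a coboundary (Livšic's theorem,
`livsic`). Let `g` be an inverse branch of `T` with fixed point `p`, so that `f p = 0`, and put
`h x = ∑_{j ≥ 1} f (g^j x)`. The series converges uniformly since `g` contracts towards `p`, so `h` is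
continuous. Let `T^m z = p`, and let `W` be the inverse branch of `T^m` with `W p = z`. The fixed
point `z_n` of `W ∘ g^n` is periodic and tends to `z`, and the vanishing of its periodic sum reads
`∑_{j ≤ n} f (g^j z_n) = -f^m(z_n)`; in the limit `h z = -f^m(z)`
(`transfer_eq_of_iterate_eq`). Thus `f = h ∘ T - h` at every preimage of `p`, and these are dense.
-/

open MeasureTheory Set

/-- A cookie cutter system: `k ≥ 2` pairwise disjoint closed intervals
`[u j, v j] ⊆ [0,1]`, each mapped bijectively onto `[0,1]` by `T`, with
`T` differentiable with `ε`-Hölder derivative `T'` satisfying `|T'| ≥ lam > 1`. -/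
structure CookieCutter where
  k : ℕ
  two_le_k : 2 ≤ k
  u : Fin k → ℝ
  v : Fin k → ℝ
  T : ℝ → ℝ
  T' : ℝ → ℝ
  lam : ℝ
  eps : ℝ
  Ceps : ℝ
  nondeg : ∀ j, u j < v j
  subset_unit : ∀ j, Icc (u j) (v j) ⊆ Icc (0:ℝ) 1
  pair_disj : Pairwise fun i j => Disjoint (Icc (u i) (v i)) (Icc (u j) (v j))
  bijOn : ∀ j, BijOn T (Icc (u j) (v j)) (Icc (0:ℝ) 1)
  hasDeriv : ∀ x ∈ ⋃ j, Icc (u j) (v j),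
    HasDerivWithinAt T (T' x) (⋃ j, Icc (u j) (v j)) x
  eps_pos : 0 < eps
  Ceps_nonneg : 0 ≤ Ceps
  holder : ∀ x ∈ ⋃ j, Icc (u j) (v j), ∀ y ∈ ⋃ j, Icc (u j) (v j),
    |T' x - T' y| ≤ Ceps * |x - y| ^ eps
  one_lt_lam : 1 < lam
  expanding : ∀ x ∈ ⋃ j, Icc (u j) (v j), lam ≤ |T' x|

/-- The length of a (bounded) interval `I ⊆ ℝ`. -/
noncomputable def setLen (I : Set ℝ) : ℝ := sSup I - sInf I

namespace CookieCutter

variable (S : CookieCutter)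

/-- The domain `I_1 ∪ ⋯ ∪ I_k` of the cookie cutter map. -/
def domain : Set ℝ := ⋃ j, Icc (S.u j) (S.v j)

/-- The set `T^{-n}([0,1])`: points whose first `n` iterates stay in the domain. -/
def level (n : ℕ) : Set ℝ := {x | ∀ m < n, S.T^[m] x ∈ S.domain}

/-- `I` is an `n`-th level basic set, i.e. a connected component of `T^{-n}([0,1])`. -/
def IsBasic (n : ℕ) (I : Set ℝ) : Prop :=
  ∃ x ∈ S.level n, I = connectedComponentIn (S.level n) x

/-- The repeller `Λ = ⋂_{n ≥ 0} T^{-n}([0,1])`. -/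
def repeller : Set ℝ := {x | ∀ n, S.T^[n] x ∈ S.domain}

/-- The function `φ = - log |T'|`. -/
noncomputable def phi (x : ℝ) : ℝ := - Real.log |S.T' x|

/-- The Birkhoff sum `fⁿ(x) = Σ_{j<n} f(T^j x)`. -/
noncomputable def birkhoff (f : ℝ → ℝ) (n : ℕ) (x : ℝ) : ℝ :=
  ∑ j ∈ Finset.range n, f (S.T^[j] x)

/-- `f` is Hölder continuous on the set `A`. -/
def IsHolderOn (f : ℝ → ℝ) (A : Set ℝ) : Prop :=
  ∃ β C : ℝ, 0 < β ∧ β ≤ 1 ∧ 0 ≤ C ∧ ∀ x ∈ A, ∀ y ∈ A, |f x - f y| ≤ C * |x - y| ^ β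

/-- `μ` is a normalized Gibbs measure for the potential `ψ`: a Borel probability
measure on the repeller with `C ≤ μ(I_n^i)/e^{ψⁿ(x)} ≤ D` for every basic set. -/
def IsGibbs (ψ : ℝ → ℝ) (μ : Measure ℝ) : Prop :=
  IsProbabilityMeasure μ ∧ μ S.repellerᶜ = 0 ∧
    ∃ C D : ℝ, 0 < C ∧ 0 < D ∧
      ∀ n, 1 ≤ n → ∀ I, S.IsBasic n I → ∀ x ∈ I ∩ S.repeller,
        C * Real.exp (S.birkhoff ψ n x) ≤ (μ I).toReal ∧
          (μ I).toReal ≤ D * Real.exp (S.birkhoff ψ n x)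

/-- `ν` is a `T`-invariant Borel probability measure on the repeller. -/
def IsInvariantProb (ν : Measure ℝ) : Prop :=
  IsProbabilityMeasure ν ∧ ν S.repellerᶜ = 0 ∧
    ∀ A, MeasurableSet A → ν (S.T ⁻¹' A) = ν A

end CookieCutter

open Filter Topology

namespace CookieCutter

/-! ### The repeller and the inverse branches -/

lemma domain_subset_unit (S : CookieCutter) : S.domain ⊆ Icc (0:ℝ) 1 :=
  iUnion_subset S.subset_unit

lemma repeller_subset_domain (S : CookieCutter) : S.repeller ⊆ S.domain := fun _ hx => hx 0

lemma repeller_subset_unit (S : CookieCutter) : S.repeller ⊆ Icc (0:ℝ) 1 :=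
  S.repeller_subset_domain.trans S.domain_subset_unit

lemma mapsTo_repeller (S : CookieCutter) : MapsTo S.T S.repeller S.repeller :=
  fun _ hx n => hx (n + 1)

lemma mapsTo_iterate_repeller (S : CookieCutter) (n : ℕ) :
    MapsTo S.T^[n] S.repeller S.repeller := S.mapsTo_repeller.iterate n

lemma mem_repeller_of_map (S : CookieCutter) {x : ℝ} (hx : x ∈ S.domain)
    (hT : S.T x ∈ S.repeller) : x ∈ S.repeller := by
  intro n
  cases n with
  | zero => exact hx
  | succ n => exact hT n

lemma continuousOn_domain (S : CookieCutter) : ContinuousOn S.T S.domain :=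
  fun x hx => (S.hasDeriv x hx).continuousWithinAt

lemma continuousOn_iterate (S : CookieCutter) (n : ℕ) :
    ContinuousOn S.T^[n] S.repeller :=
  (S.continuousOn_domain.mono S.repeller_subset_domain).iterate S.mapsTo_repeller n

lemma lam_inv_nonneg (S : CookieCutter) : 0 ≤ S.lam⁻¹ :=
  inv_nonneg.2 (zero_le_one.trans S.one_lt_lam.le)

lemma lam_inv_lt_one (S : CookieCutter) : S.lam⁻¹ < 1 := inv_lt_one_of_one_lt₀ S.one_lt_lam

/-- Expansion of `T` on each interval, by the mean value theorem. -/
lemma dist_le_of_mem (S : CookieCutter) (j : Fin S.k) {x y : ℝ}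
    (hx : x ∈ Icc (S.u j) (S.v j)) (hy : y ∈ Icc (S.u j) (S.v j)) :
    |x - y| ≤ S.lam⁻¹ * |S.T x - S.T y| := by
  have hlam : 0 < S.lam := zero_lt_one.trans S.one_lt_lam
  wlog hxy : x < y generalizing x y
  · rcases eq_or_lt_of_le (not_lt.1 hxy) with h | h
    · simp [h]
    · rw [abs_sub_comm x, abs_sub_comm (S.T x)]
      exact this hy hx h
  have hsub : Icc x y ⊆ Icc (S.u j) (S.v j) := Icc_subset_Icc hx.1 hy.2
  have hsub' : Icc x y ⊆ S.domain := hsub.trans (subset_iUnion (fun j => Icc (S.u j) (S.v j)) j)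
  obtain ⟨c, hc, hc'⟩ := exists_hasDerivAt_eq_slope S.T S.T' hxy
    (S.continuousOn_domain.mono hsub') (fun c hc =>
      ((S.hasDeriv c (hsub' (Ioo_subset_Icc_self hc))).mono hsub').hasDerivAt
        (Icc_mem_nhds hc.1 hc.2))
  have h1 := S.expanding c (hsub' (Ioo_subset_Icc_self hc))
  rw [hc', abs_div, le_div_iff₀ (abs_pos.2 (sub_ne_zero.2 hxy.ne'))] at h1
  rw [abs_sub_comm x, abs_sub_comm (S.T x), le_inv_mul_iff₀ hlam]
  exact h1

/-- The inverse of `T : I_j → [0,1]` (with junk values off `[0,1]`). -/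
noncomputable def invBranch (S : CookieCutter) (j : Fin S.k) : ℝ → ℝ :=
  Function.invFunOn S.T (Icc (S.u j) (S.v j))

lemma invBranch_mem (S : CookieCutter) (j : Fin S.k) {y : ℝ} (hy : y ∈ Icc (0:ℝ) 1) :
    S.invBranch j y ∈ Icc (S.u j) (S.v j) :=
  Function.invFunOn_mem ((S.bijOn j).surjOn hy)

lemma map_invBranch (S : CookieCutter) (j : Fin S.k) {y : ℝ} (hy : y ∈ Icc (0:ℝ) 1) :
    S.T (S.invBranch j y) = y :=
  Function.invFunOn_eq ((S.bijOn j).surjOn hy)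

lemma invBranch_map (S : CookieCutter) (j : Fin S.k) {x : ℝ}
    (hx : x ∈ Icc (S.u j) (S.v j)) : S.invBranch j (S.T x) = x := by
  have hy := (S.bijOn j).mapsTo hx
  exact (S.bijOn j).injOn (S.invBranch_mem j hy) hx (S.map_invBranch j hy)

lemma invBranch_mem_domain (S : CookieCutter) (j : Fin S.k) {y : ℝ} (hy : y ∈ Icc (0:ℝ) 1) :
    S.invBranch j y ∈ S.domain :=
  mem_iUnion.2 ⟨j, S.invBranch_mem j hy⟩

/-- `S.IsBranch n W` says that `W` is a composition of `n` inverse branches `invBranch j`, that is,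
an inverse branch of `T^n`. -/
inductive IsBranch (S : CookieCutter) : ℕ → (ℝ → ℝ) → Prop
  | id : IsBranch S 0 id
  | cons {n : ℕ} {W : ℝ → ℝ} (j : Fin S.k) (h : IsBranch S n W) :
      IsBranch S (n + 1) (S.invBranch j ∘ W)

namespace IsBranch

variable {S : CookieCutter} {n m : ℕ} {W V : ℝ → ℝ}

lemma mapsTo_unit (h : S.IsBranch n W) : MapsTo W (Icc (0:ℝ) 1) (Icc (0:ℝ) 1) := by
  induction h with
  | id => exact mapsTo_id _
  | cons j h ih => exact fun y hy => S.domain_subset_unit (S.invBranch_mem_domain j (ih hy))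

lemma iterate_apply (h : S.IsBranch n W) {y : ℝ} (hy : y ∈ Icc (0:ℝ) 1) : S.T^[n] (W y) = y := by
  induction h with
  | id => rfl
  | cons j h ih =>
    rw [Function.iterate_succ_apply, Function.comp_apply, S.map_invBranch j (h.mapsTo_unit hy), ih]

lemma iterate_mem_domain (h : S.IsBranch n W) {y : ℝ} (hy : y ∈ Icc (0:ℝ) 1) :
    ∀ m < n, S.T^[m] (W y) ∈ S.domain := by
  induction h with
  | id => intro m hm; omega
  | cons j h ih =>
    intro m hm
    cases m with
    | zero => exact S.invBranch_mem_domain j (h.mapsTo_unit hy)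
    | succ m =>
      rw [Function.iterate_succ_apply, Function.comp_apply, S.map_invBranch j (h.mapsTo_unit hy)]
      exact ih m (by omega)

lemma dist_le (h : S.IsBranch n W) {y y' : ℝ} (hy : y ∈ Icc (0:ℝ) 1) (hy' : y' ∈ Icc (0:ℝ) 1) :
    |W y - W y'| ≤ S.lam⁻¹ ^ n * |y - y'| := by
  induction h with
  | id => simp
  | cons j h ih =>
    have h1 := S.dist_le_of_mem j (S.invBranch_mem j (h.mapsTo_unit hy))
      (S.invBranch_mem j (h.mapsTo_unit hy'))
    rw [S.map_invBranch j (h.mapsTo_unit hy), S.map_invBranch j (h.mapsTo_unit hy')] at h1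
    calc _ ≤ _ := h1
      _ ≤ _ := mul_le_mul_of_nonneg_left ih S.lam_inv_nonneg
      _ = _ := by ring

lemma dist_le_pow (h : S.IsBranch n W) {y y' : ℝ} (hy : y ∈ Icc (0:ℝ) 1)
    (hy' : y' ∈ Icc (0:ℝ) 1) : |W y - W y'| ≤ S.lam⁻¹ ^ n :=
  (h.dist_le hy hy').trans (mul_le_of_le_one_right (pow_nonneg S.lam_inv_nonneg n)
    (abs_le.2 ⟨by linarith [hy.1, hy'.2], by linarith [hy.2, hy'.1]⟩))

lemma continuousOn (h : S.IsBranch n W) : ContinuousOn W (Icc (0:ℝ) 1) := by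
  have : LipschitzOnWith (Real.toNNReal (S.lam⁻¹ ^ n)) W (Icc (0:ℝ) 1) :=
    LipschitzOnWith.of_dist_le_mul fun x hx y hy => by
      rw [Real.coe_toNNReal _ (pow_nonneg S.lam_inv_nonneg n), Real.dist_eq, Real.dist_eq]
      exact h.dist_le hx hy
  exact this.continuousOn

lemma mapsTo_repeller (h : S.IsBranch n W) : MapsTo W S.repeller S.repeller := by
  induction h with
  | id => exact mapsTo_id _
  | cons j h ih =>
    intro y hy
    have hu := h.mapsTo_unit (S.repeller_subset_unit hy)
    refine S.mem_repeller_of_map (S.invBranch_mem_domain j hu) ?_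
    rw [Function.comp_apply, S.map_invBranch j hu]
    exact ih hy

lemma comp (h : S.IsBranch n W) (h' : S.IsBranch m V) : S.IsBranch (n + m) (W ∘ V) := by
  induction h with
  | id => simpa using h'
  | cons j h ih =>
    rw [Nat.add_right_comm]
    exact ih.cons j

/-- A fixed point of an inverse branch of `T^n` is a periodic point of `T` in the repeller. -/
lemma exists_fixed (h : S.IsBranch n W) (hn : n ≠ 0) :
    ∃ z ∈ S.repeller, W z = z ∧ S.T^[n] z = z := by
  obtain ⟨z, hz, hWz⟩ := exists_mem_Icc_isFixedPt_of_mapsTo h.continuousOn zero_le_one h.mapsTo_unit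
  have hWz' : W z = z := hWz
  have hper : S.T^[n] z = z := by
    have := h.iterate_apply hz
    rwa [hWz'] at this
  refine ⟨z, fun m => ?_, hWz', hper⟩
  have hp : Function.IsPeriodicPt S.T n z := hper
  rw [← hp.iterate_mod_apply m]
  have := h.iterate_mem_domain hz (m % n) (Nat.mod_lt _ (Nat.pos_of_ne_zero hn))
  rwa [hWz'] at this

end IsBranch

lemma isBranch_iterate (S : CookieCutter) (j : Fin S.k) (n : ℕ) :
    S.IsBranch n (S.invBranch j)^[n] := by
  induction n with
  | zero => exact IsBranch.id
  | succ n ih =>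
    rw [Function.iterate_succ']
    exact ih.cons j

lemma exists_isBranch (S : CookieCutter) (n : ℕ) {x : ℝ} (hx : x ∈ S.repeller) :
    ∃ W, S.IsBranch n W ∧ W (S.T^[n] x) = x := by
  induction n generalizing x with
  | zero => exact ⟨id, IsBranch.id, rfl⟩
  | succ n ih =>
    obtain ⟨W, hW, hWx⟩ := ih (S.mapsTo_repeller hx)
    obtain ⟨j, hj⟩ := mem_iUnion.1 (S.repeller_subset_domain hx)
    refine ⟨_, hW.cons j, ?_⟩
    rw [Function.iterate_succ_apply, Function.comp_apply, hWx, S.invBranch_map j hj]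

/-! ### Livšic's theorem -/

section Livsic

variable {S : CookieCutter} {f : ℝ → ℝ} {β C : ℝ}

lemma continuousOn_of_holder (hβ : 0 < β)
    (hf : ∀ x ∈ S.repeller, ∀ y ∈ S.repeller, |f x - f y| ≤ C * |x - y| ^ β) :
    ContinuousOn f S.repeller := by
  intro x hx
  have h0 : Tendsto (fun y => C * |y - x| ^ β) (𝓝[S.repeller] x) (𝓝 0) := by
    have : ContinuousAt (fun y => C * |y - x| ^ β) x := by
      refine continuousAt_const.mul (ContinuousAt.rpow_const (by fun_prop) (Or.inr hβ.le))
    have h := this.tendsto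
    simp only [sub_self, abs_zero, Real.zero_rpow hβ.ne', mul_zero] at h
    exact h.mono_left nhdsWithin_le_nhds
  rw [ContinuousWithinAt, tendsto_iff_dist_tendsto_zero]
  refine squeeze_zero' (Eventually.of_forall fun _ => dist_nonneg) ?_ h0
  filter_upwards [self_mem_nhdsWithin] with y hy
  rw [Real.dist_eq]
  exact hf y hy x hx

/-- The transfer function `h x = ∑_{i ≥ 1} f (g^i x)` of Livšic's theorem, where `g` is the inverse
branch of index `j`. -/
noncomputable def transfer (S : CookieCutter) (j : Fin S.k) (f : ℝ → ℝ) (x : ℝ) : ℝ :=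
  ∑' i : ℕ, f ((S.invBranch j)^[i + 1] x)

/-- The bound making the transfer series converge; here `p` is the fixed point of the branch. -/
lemma term_bound (hβ : 0 < β) (hC : 0 ≤ C)
    (hf : ∀ x ∈ S.repeller, ∀ y ∈ S.repeller, |f x - f y| ≤ C * |x - y| ^ β)
    {j : Fin S.k} {p : ℝ} (hp : p ∈ S.repeller) (hgp : S.invBranch j p = p) (hfp : f p = 0)
    (i : ℕ) {x : ℝ} (hx : x ∈ S.repeller) :
    ‖f ((S.invBranch j)^[i + 1] x)‖ ≤ C * (S.lam⁻¹ ^ β) ^ (i + 1) := by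
  have hb := S.isBranch_iterate j (i + 1)
  have h1 := hf _ (hb.mapsTo_repeller hx) p hp
  have h2 := hb.dist_le_pow (S.repeller_subset_unit hx) (S.repeller_subset_unit hp)
  rw [Function.iterate_fixed hgp] at h2
  rw [hfp, sub_zero] at h1
  rw [Real.norm_eq_abs]
  refine h1.trans (mul_le_mul_of_nonneg_left ?_ hC)
  calc _ ≤ (S.lam⁻¹ ^ (i + 1)) ^ β := Real.rpow_le_rpow (abs_nonneg _) h2 hβ.le
    _ = _ := by
      rw [← Real.rpow_natCast, ← Real.rpow_natCast, ← Real.rpow_mul S.lam_inv_nonneg,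
        ← Real.rpow_mul S.lam_inv_nonneg, mul_comm]

lemma summable_bound (S : CookieCutter) (hβ : 0 < β) (C : ℝ) :
    Summable fun i : ℕ => C * (S.lam⁻¹ ^ β) ^ (i + 1) := by
  have h := summable_geometric_of_lt_one (Real.rpow_nonneg S.lam_inv_nonneg β)
    (Real.rpow_lt_one S.lam_inv_nonneg S.lam_inv_lt_one hβ)
  exact ((summable_nat_add_iff 1).2 h).mul_left C

lemma continuousOn_transfer (hβ : 0 < β) (hC : 0 ≤ C)
    (hf : ∀ x ∈ S.repeller, ∀ y ∈ S.repeller, |f x - f y| ≤ C * |x - y| ^ β)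
    {j : Fin S.k} {p : ℝ} (hp : p ∈ S.repeller) (hgp : S.invBranch j p = p) (hfp : f p = 0) :
    ContinuousOn (S.transfer j f) S.repeller := by
  refine continuousOn_tsum (fun i => ?_) (S.summable_bound hβ C)
    (fun i x hx => term_bound hβ hC hf hp hgp hfp i hx)
  have hb := S.isBranch_iterate j (i + 1)
  exact (continuousOn_of_holder hβ hf).comp (hb.continuousOn.mono S.repeller_subset_unit)
    hb.mapsTo_repeller

lemma birkhoff_add (S : CookieCutter) (f : ℝ → ℝ) (m n : ℕ) (x : ℝ) :
    S.birkhoff f (m + n) x = S.birkhoff f m x + S.birkhoff f n (S.T^[m] x) := by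
  rw [birkhoff, Finset.sum_range_add]
  simp only [birkhoff, ← Function.iterate_add_apply, Nat.add_comm]

/-- The Birkhoff sum of length `n` at `g^n x` is a partial sum of the transfer series at `x`. -/
lemma birkhoff_iterate_invBranch (S : CookieCutter) (f : ℝ → ℝ) (j : Fin S.k) (n : ℕ) {x : ℝ}
    (hx : x ∈ S.repeller) :
    S.birkhoff f n ((S.invBranch j)^[n] x) =
      ∑ i ∈ Finset.range n, f ((S.invBranch j)^[i + 1] x) := by
  rw [birkhoff, ← Finset.sum_range_reflect]
  refine Finset.sum_congr rfl fun i hi => ?_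
  have hi' := Finset.mem_range.1 hi
  have hn : n = (n - 1 - i) + (i + 1) := by omega
  have hb := S.isBranch_iterate j (n - 1 - i)
  conv_lhs => rw [hn, Function.iterate_add_apply (S.invBranch j)]
  have he : n - 1 - i + (i + 1) - 1 - i = n - 1 - i := by omega
  rw [he, hb.iterate_apply
    ((S.isBranch_iterate j (i + 1)).mapsTo_unit (S.repeller_subset_unit hx))]

/-- If all periodic sums of `f` vanish, then at a point `z` with `T^m z = p` the transfer function is
minus the `m`-th Birkhoff sum. -/
lemma transfer_eq_of_iterate_eq (hβ : 0 < β) (hC : 0 ≤ C)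
    (hf : ∀ x ∈ S.repeller, ∀ y ∈ S.repeller, |f x - f y| ≤ C * |x - y| ^ β)
    (hper : ∀ n, ∀ x ∈ S.repeller, S.T^[n] x = x → S.birkhoff f n x = 0)
    {j : Fin S.k} {p : ℝ} (hp : p ∈ S.repeller) (hgp : S.invBranch j p = p) (hfp : f p = 0)
    {m : ℕ} {z : ℝ} (hz : z ∈ S.repeller) (hzp : S.T^[m] z = p) :
    S.transfer j f z = -S.birkhoff f m z := by
  obtain ⟨W, hW, hWz⟩ := S.exists_isBranch m hz
  rw [hzp] at hWz
  have hg := S.isBranch_iterate j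
  -- `y n` is the fixed point of `W ∘ g^(n+1)`; the shift keeps the period positive when `m = 0`.
  choose y hy hWy hTy using fun n : ℕ => (hW.comp (hg (n + 1))).exists_fixed (by omega)
  have hlim : Tendsto y atTop (𝓝[S.repeller] z) := by
    refine tendsto_nhdsWithin_iff.2 ⟨?_, Eventually.of_forall hy⟩
    rw [tendsto_iff_dist_tendsto_zero]
    refine squeeze_zero (fun _ => dist_nonneg) (fun n => ?_)
      ((tendsto_pow_atTop_nhds_zero_of_lt_one S.lam_inv_nonneg S.lam_inv_lt_one).comp
        (tendsto_add_atTop_nat 1))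
    have hyu := S.repeller_subset_unit (hy n)
    have hpu := S.repeller_subset_unit hp
    have h1 := hW.dist_le ((hg (n + 1)).mapsTo_unit hyu) hpu
    have h2 := (hg (n + 1)).dist_le_pow hyu hpu
    rw [Function.iterate_fixed hgp] at h2
    have h3 : W ((S.invBranch j)^[n + 1] (y n)) = y n := hWy n
    rw [h3, hWz] at h1
    rw [Real.dist_eq]
    exact h1.trans ((mul_le_of_le_one_left (abs_nonneg _)
      (pow_le_one₀ S.lam_inv_nonneg S.lam_inv_lt_one.le)).trans h2)
  have hsum : ∀ n, ∑ i ∈ Finset.range (n + 1), f ((S.invBranch j)^[i + 1] (y n)) =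
      -S.birkhoff f m (y n) := by
    intro n
    have h0 := hper _ _ (hy n) (hTy n)
    have h3 : W ((S.invBranch j)^[n + 1] (y n)) = y n := hWy n
    have h4 := hW.iterate_apply ((hg (n + 1)).mapsTo_unit (S.repeller_subset_unit (hy n)))
    rw [h3] at h4
    rw [S.birkhoff_add, h4, S.birkhoff_iterate_invBranch f j _ (hy n)] at h0
    linarith
  have hunif : TendstoUniformlyOn
      (fun n x => ∑ i ∈ Finset.range (n + 1), f ((S.invBranch j)^[i + 1] x))
      (S.transfer j f) atTop S.repeller :=
    fun u hu => (tendsto_add_atTop_nat 1).eventually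
      (tendstoUniformlyOn_tsum_nat (S.summable_bound hβ C)
        (fun i x hx => term_bound hβ hC hf hp hgp hfp i hx) u hu)
  have hL : Tendsto (fun n => ∑ i ∈ Finset.range (n + 1), f ((S.invBranch j)^[i + 1] (y n))) atTop
      (𝓝 (S.transfer j f z)) :=
    hunif.tendstoLocallyUniformlyOn.tendsto_comp
      (continuousOn_transfer hβ hC hf hp hgp hfp z hz) hz hlim
  have hB : ContinuousOn (S.birkhoff f m) S.repeller :=
    continuousOn_finsetSum _ fun i _ =>
      (continuousOn_of_holder hβ hf).comp (S.continuousOn_iterate i) (S.mapsTo_iterate_repeller i)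
  have hR : Tendsto (fun n => -S.birkhoff f m (y n)) atTop (𝓝 (-S.birkhoff f m z)) :=
    ((hB z hz).tendsto.comp hlim).neg
  simp only [hsum] at hL
  exact tendsto_nhds_unique hL hR

/-- Livšic's theorem: a Hölder function all of whose periodic sums vanish is a coboundary. -/
theorem livsic (hβ : 0 < β) (hC : 0 ≤ C)
    (hf : ∀ x ∈ S.repeller, ∀ y ∈ S.repeller, |f x - f y| ≤ C * |x - y| ^ β)
    (hper : ∀ n, ∀ x ∈ S.repeller, S.T^[n] x = x → S.birkhoff f n x = 0) :
    ∃ h : ℝ → ℝ, ContinuousOn h S.repeller ∧ ∀ x ∈ S.repeller, f x = h (S.T x) - h x := by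
  have hk : 0 < S.k := by have := S.two_le_k; omega
  set j : Fin S.k := ⟨0, hk⟩
  obtain ⟨p, hp, hgp, hTp⟩ := (S.isBranch_iterate j 1).exists_fixed one_ne_zero
  rw [Function.iterate_one] at hgp
  have hfp : f p = 0 := by simpa [birkhoff] using hper 1 p hp hTp
  have hcont := continuousOn_transfer hβ hC hf hp hgp hfp
  refine ⟨S.transfer j f, hcont, fun x hx => ?_⟩
  -- `W n p` is the preimage of `p` of order `n + 1` on the same branch of `T^(n+1)` as `x`.
  choose W hW hWx using fun n : ℕ => S.exists_isBranch (n + 1) hx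
  have hz : ∀ n, W n p ∈ S.repeller := fun n => (hW n).mapsTo_repeller hp
  have hTz : ∀ n, S.T^[n + 1] (W n p) = p :=
    fun n => (hW n).iterate_apply (S.repeller_subset_unit hp)
  have hlim : Tendsto (fun n => W n p) atTop (𝓝[S.repeller] x) := by
    refine tendsto_nhdsWithin_iff.2 ⟨?_, Eventually.of_forall hz⟩
    rw [tendsto_iff_dist_tendsto_zero]
    refine squeeze_zero (fun _ => dist_nonneg) (fun n => ?_)
      ((tendsto_pow_atTop_nhds_zero_of_lt_one S.lam_inv_nonneg S.lam_inv_lt_one).comp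
        (tendsto_add_atTop_nat 1))
    have h1 := (hW n).dist_le_pow (S.repeller_subset_unit hp)
      (S.repeller_subset_unit (S.mapsTo_iterate_repeller (n + 1) hx))
    rwa [hWx n] at h1
  have hval : ∀ n, f (W n p) = S.transfer j f (S.T (W n p)) - S.transfer j f (W n p) := by
    intro n
    rw [transfer_eq_of_iterate_eq hβ hC hf hper hp hgp hfp (hz n) (hTz n),
      transfer_eq_of_iterate_eq hβ hC hf hper hp hgp hfp (S.mapsTo_repeller (hz n))
        (m := n) (hTz n), Nat.add_comm n 1, S.birkhoff_add f 1 n]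
    simp [birkhoff]
  have hL := (continuousOn_of_holder hβ hf x hx).tendsto.comp hlim
  have hR : ContinuousOn (fun x => S.transfer j f (S.T x) - S.transfer j f x) S.repeller :=
    (hcont.comp (S.continuousOn_domain.mono S.repeller_subset_domain) S.mapsTo_repeller).sub hcont
  have hR' := (hR x hx).tendsto.comp hlim
  refine tendsto_nhds_unique hL (hR'.congr fun n => ?_)
  exact (hval n).symm

end Livsic

/-! ### Hölder continuity of `ψ - αφ` -/

lemma abs_log_sub_log_le {a b : ℝ} (ha : 1 ≤ a) (hb : 1 ≤ b) :
    |Real.log a - Real.log b| ≤ |a - b| := by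
  wlog hab : b ≤ a generalizing a b
  · rw [abs_sub_comm, abs_sub_comm a]
    exact this hb ha (not_le.1 hab).le
  have hb0 : 0 < b := by linarith
  have ha0 : 0 < a := by linarith
  rw [abs_of_nonneg (sub_nonneg.2 (Real.log_le_log hb0 hab)), abs_of_nonneg (sub_nonneg.2 hab),
    ← Real.log_div ha0.ne' hb0.ne']
  calc Real.log (a / b) ≤ a / b - 1 := Real.log_le_sub_one_of_pos (by positivity)
    _ = (a - b) / b := by field_simp
    _ ≤ a - b := div_le_self (sub_nonneg.2 hab) hb

lemma exists_holder_bound (S : CookieCutter) {ψ : ℝ → ℝ} (hψ : IsHolderOn ψ S.repeller) (α : ℝ) :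
    ∃ β C : ℝ, 0 < β ∧ 0 ≤ C ∧ ∀ x ∈ S.repeller, ∀ y ∈ S.repeller,
      |(ψ x - α * S.phi x) - (ψ y - α * S.phi y)| ≤ C * |x - y| ^ β := by
  obtain ⟨β, C, hβ, -, hC, h⟩ := hψ
  have hC' : 0 ≤ |α| * S.Ceps := mul_nonneg (abs_nonneg _) S.Ceps_nonneg
  refine ⟨min β S.eps, C + |α| * S.Ceps, lt_min hβ S.eps_pos, by linarith, fun x hx y hy => ?_⟩
  have hx' := S.repeller_subset_domain hx
  have hy' := S.repeller_subset_domain hy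
  have hxu := S.domain_subset_unit hx'
  have hyu := S.domain_subset_unit hy'
  have hd : |x - y| ≤ 1 := abs_le.2 ⟨by linarith [hxu.1, hyu.2], by linarith [hxu.2, hyu.1]⟩
  have hm : 0 ≤ min β S.eps := (lt_min hβ S.eps_pos).le
  have e1 : |x - y| ^ β ≤ |x - y| ^ min β S.eps :=
    Real.rpow_le_rpow_of_exponent_ge' (abs_nonneg _) hd hm (min_le_left _ _)
  have e2 : |x - y| ^ S.eps ≤ |x - y| ^ min β S.eps :=
    Real.rpow_le_rpow_of_exponent_ge' (abs_nonneg _) hd hm (min_le_right _ _)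
  have hphi : |S.phi x - S.phi y| ≤ S.Ceps * |x - y| ^ S.eps := by
    have h1 := abs_log_sub_log_le (S.one_lt_lam.le.trans (S.expanding y hy'))
      (S.one_lt_lam.le.trans (S.expanding x hx'))
    have h2 : S.phi x - S.phi y = Real.log |S.T' y| - Real.log |S.T' x| := by
      simp only [phi]; ring
    rw [h2]
    refine h1.trans ((abs_abs_sub_abs_le _ _).trans ?_)
    rw [abs_sub_comm]
    exact S.holder x hx' y hy'
  calc _ = |(ψ x - ψ y) - α * (S.phi x - S.phi y)| := by congr 1; ring
    _ ≤ |ψ x - ψ y| + |α| * |S.phi x - S.phi y| := by rw [← abs_mul]; exact abs_sub _ _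
    _ ≤ C * |x - y| ^ β + |α| * (S.Ceps * |x - y| ^ S.eps) := by
      gcongr
      exact h x hx y hy
    _ ≤ C * |x - y| ^ min β S.eps + |α| * (S.Ceps * |x - y| ^ min β S.eps) := by
      have := S.Ceps_nonneg
      gcongr
    _ = _ := by ring

/-! ### The subgroup `S_{α,0}` -/

/-- The subgroup of those `t` for which `t f` is cohomologous to a continuous `2πℤ`-valued
function. -/
def latticeSubgroup (S : CookieCutter) (f : ℝ → ℝ) : AddSubgroup ℝ where
  carrier := {t : ℝ | ∃ (Φ h : ℝ → ℝ),
        ContinuousOn Φ S.repeller ∧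
        (∀ x ∈ S.repeller, ∃ m : ℤ, Φ x = 2 * Real.pi * m) ∧
        ContinuousOn h S.repeller ∧
        ∀ x ∈ S.repeller, t * f x = Φ x + h (S.T x) - h x}
  zero_mem' := ⟨fun _ => 0, fun _ => 0, continuousOn_const, fun _ _ => ⟨0, by simp⟩,
    continuousOn_const, by simp⟩
  add_mem' := by
    rintro s t ⟨Φ, h, hΦ, hm, hh, he⟩ ⟨Φ', h', hΦ', hm', hh', he'⟩
    refine ⟨fun x => Φ x + Φ' x, fun x => h x + h' x, hΦ.add hΦ', fun x hx => ?_, hh.add hh',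
      fun x hx => ?_⟩
    · obtain ⟨m, hm⟩ := hm x hx
      obtain ⟨m', hm'⟩ := hm' x hx
      exact ⟨m + m', by push_cast; rw [hm, hm']; ring⟩
    · linarith [he x hx, he' x hx]
  neg_mem' := by
    rintro t ⟨Φ, h, hΦ, hm, hh, he⟩
    refine ⟨fun x => -Φ x, fun x => -h x, hΦ.neg, fun x hx => ?_, hh.neg, fun x hx => ?_⟩
    · obtain ⟨m, hm⟩ := hm x hx
      exact ⟨-m, by push_cast; rw [hm]; ring⟩
    · linarith [he x hx]

lemma mul_birkhoff_of_mem (S : CookieCutter) {f : ℝ → ℝ} {t : ℝ} (ht : t ∈ S.latticeSubgroup f)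
    {n : ℕ} {x : ℝ} (hx : x ∈ S.repeller) (hn : S.T^[n] x = x) :
    ∃ m : ℤ, t * S.birkhoff f n x = 2 * Real.pi * m := by
  obtain ⟨Φ, h, -, hm, -, he⟩ := ht
  choose! m hm using hm
  refine ⟨∑ i ∈ Finset.range n, m (S.T^[i] x), ?_⟩
  have h1 : ∀ i, t * f (S.T^[i] x) =
      2 * Real.pi * m (S.T^[i] x) + (h (S.T^[i + 1] x) - h (S.T^[i] x)) := by
    intro i
    have hi := S.mapsTo_iterate_repeller i hx
    rw [he _ hi, hm _ hi, Function.iterate_succ_apply']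
    ring
  rw [birkhoff, Finset.mul_sum, Finset.sum_congr rfl fun i _ => h1 i, Finset.sum_add_distrib,
    Finset.sum_range_sub (fun i => h (S.T^[i] x)), hn]
  simp [Finset.mul_sum]

end CookieCutter

/-- If `ψ - αφ` is not cohomologous to zero, then the set `S_{α,0}` of `t ∈ ℝ`
such that `t(ψ - αφ)` is cohomologous to a continuous `2πℤ`-valued function is a
discrete subgroup of `(ℝ, +)`, i.e. equals `κℤ` for some `κ ≥ 0`. -/
theorem Salpha0_discrete_subgroup (S : CookieCutter) (ψ : ℝ → ℝ)
    (hψ : CookieCutter.IsHolderOn ψ S.repeller) (α : ℝ)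
    (hnc : ¬ ∃ h : ℝ → ℝ, ContinuousOn h S.repeller ∧
      ∀ x ∈ S.repeller, ψ x - α * S.phi x = h (S.T x) - h x) :
    ∃ κ : ℝ, 0 ≤ κ ∧
      {t : ℝ | ∃ (Φ h : ℝ → ℝ),
        ContinuousOn Φ S.repeller ∧
        (∀ x ∈ S.repeller, ∃ m : ℤ, Φ x = 2 * Real.pi * m) ∧
        ContinuousOn h S.repeller ∧
        ∀ x ∈ S.repeller, t * (ψ x - α * S.phi x) = Φ x + h (S.T x) - h x}
      = {t : ℝ | ∃ m : ℤ, t = κ * m} := by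
  set f : ℝ → ℝ := fun x => ψ x - α * S.phi x with hfdef
  obtain ⟨β, C, hβ, hC, hf⟩ := S.exists_holder_bound hψ α
  obtain ⟨n, x, hx, hn, hc⟩ : ∃ n, ∃ x ∈ S.repeller, S.T^[n] x = x ∧ S.birkhoff f n x ≠ 0 := by
    by_contra! hcon
    exact hnc (CookieCutter.livsic (f := f) hβ hC hf hcon)
  rcases (S.latticeSubgroup f).dense_or_cyclic with hd | ⟨a, ha⟩
  · exfalso
    set c := S.birkhoff f n x
    have hc' : 0 < |c| := abs_pos.2 hc
    have hpi := Real.pi_pos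
    obtain ⟨t, ht, ht0, ht1⟩ := hd.exists_between (show (0:ℝ) < 2 * Real.pi / |c| by positivity)
    obtain ⟨m, hm⟩ := S.mul_birkhoff_of_mem ht hx hn
    have h1 : |t * c| < 2 * Real.pi := by
      rw [abs_mul, abs_of_pos ht0]
      exact (lt_div_iff₀ hc').1 ht1
    rw [hm, abs_mul, abs_of_pos (by positivity), mul_lt_iff_lt_one_right (by positivity)] at h1
    have hm0 : m = 0 := Int.abs_lt_one_iff.1 (by exact_mod_cast h1)
    rw [hm0, Int.cast_zero, mul_zero] at hm
    exact (mul_ne_zero ht0.ne' hc) hm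
  · refine ⟨|a|, abs_nonneg a, ?_⟩
    ext t
    change t ∈ S.latticeSubgroup f ↔ _
    rw [ha, AddSubgroup.mem_closure_singleton]
    simp only [zsmul_eq_mul, mem_ofPred_eq]
    rcases abs_choice a with h | h <;> rw [h]
    · exact exists_congr fun m => by rw [mul_comm, eq_comm]
    · constructor
      · rintro ⟨m, rfl⟩
        exact ⟨-m, by push_cast; ring⟩
      · rintro ⟨m, rfl⟩
        exact ⟨-m, by push_cast; ring⟩
end

section
/- Let (T, Λ) be a cookie cutter system, ψ : Λ → ℝ Hölder continuous, μ a normalized Gibbs measure for ψ, and α ≥ 0. Suppose that every T-invariant Borel probability measure ν on Λ satisfies ∫_Λ (ψ − αφ) dν ≥ 0. Then there exists b₀ > 0 such that for all b with 0 < b ≤ b₀, no basic set satisfies μ(I_n^i) ≤ b·|I_n^i|^α; in particular, for any 0 < a ≤ b ≤ b₀ the multifractal zeta function ζ_α^μ is identically zero. Symmetrically, if every T-invariant Borel probability measure ν satisfies ∫_Λ (ψ − αφ) dν ≤ 0, then there exists a₀ > 0 such that for all a ≥ a₀ no basic set satisfies a·|I_n^i|^α ≤ μ(I_n^i). -/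
/-!
Every basic set `I` of level `n ≥ 1` contains a periodic point `x` with `T^n x = x`: the inverse
branch `[0,1] → I` of `T^n` is a continuous self-map of `[0,1]`. The uniform measure on the orbit
of `x` is an invariant probability measure (`orbitMeasure_invariant`), and the integral of a
function `f` against it is `fⁿ(x) / n`. The hypothesis on invariant measures therefore gives
`ψⁿ(x) ≥ α φⁿ(x)` (respectively `≤`) at this particular point of `I`.

The Gibbs property compares `μ(I)` with `e^{ψⁿ(x)}`, and bounded distortion (`basic_geometry`)
compares `|I|` with `e^{φⁿ(x)}` up to a factor `e^{±L}` independent of `n` and `I`. Hence `μ(I)` is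
bounded below (respectively above) by a uniform constant times `|I|^α`.

Basic sets are handled through cylinders: the component of `T^{-n}([0,1])` containing `x` is the
set of points with the same length-`n` itinerary as `x` (`basic_eq_cyl`), and each such cylinder
is the image of `[0,1]` under a composition of inverse branches (`exists_inverse_branch`).
-/

open MeasureTheory Set

namespace CookieCutter

variable (S : CookieCutter)

/-- The cylinder of points of `[0,1]` whose first `n` iterates follow the itinerary `w`. -/
def cyl (w : ℕ → Fin S.k) (n : ℕ) : Set ℝ :=
  {y | y ∈ Icc (0:ℝ) 1 ∧ ∀ m < n, S.T^[m] y ∈ Icc (S.u (w m)) (S.v (w m))}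

variable {S}

lemma mem_domain {j : Fin S.k} {x : ℝ} (h : x ∈ Icc (S.u j) (S.v j)) : x ∈ S.domain :=
  mem_iUnion.2 ⟨j, h⟩

lemma exp_neg_phi {x : ℝ} (hx : x ∈ S.domain) : Real.exp (-S.phi x) = |S.T' x| := by
  have h := S.expanding x hx
  have h1 := S.one_lt_lam
  rw [phi, neg_neg, Real.exp_log (by linarith)]

lemma exp_neg_birkhoff_succ (n : ℕ) (y : ℝ) (hy : S.T^[n] y ∈ S.domain) :
    Real.exp (-S.birkhoff S.phi (n + 1) y) =
      |S.T' (S.T^[n] y)| * Real.exp (-S.birkhoff S.phi n y) := by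
  rw [birkhoff, Finset.sum_range_succ, neg_add, Real.exp_add, exp_neg_phi hy, mul_comm]
  rfl

/-! ### Derivatives of iterates and the mean value theorem -/

lemma exists_hasDerivWithinAt_iterate {A : Set ℝ} (n : ℕ)
    (hA : ∀ y ∈ A, ∀ m < n, S.T^[m] y ∈ S.domain) {y : ℝ} (hy : y ∈ A) :
    ∃ d, HasDerivWithinAt (S.T^[n]) d A y ∧ |d| = Real.exp (-S.birkhoff S.phi n y) := by
  induction n with
  | zero => exact ⟨1, by simpa using hasDerivWithinAt_id y A, by simp [birkhoff]⟩
  | succ n ih =>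
    obtain ⟨d, hd, hd'⟩ := ih (fun z hz m hm => hA z hz m (by omega))
    refine ⟨S.T' (S.T^[n] y) * d, ?_, ?_⟩
    · rw [Function.iterate_succ']
      exact HasDerivWithinAt.comp y (S.hasDeriv _ (hA y hy n (by omega))) hd
        (fun z hz => hA z hz n (by omega))
    · rw [exp_neg_birkhoff_succ n y (hA y hy n (by omega)), abs_mul, hd']

/-- Mean value theorem for `T^n` on an interval whose first `n` images stay in the domain; the
derivative is written as `exp (-φⁿ)`. -/
lemma exists_mvt {a b : ℝ} (n : ℕ)
    (hA : ∀ y ∈ Icc a b, ∀ m < n, S.T^[m] y ∈ S.domain) {p q : ℝ}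
    (hp : p ∈ Icc a b) (hq : q ∈ Icc a b) :
    ∃ y ∈ Icc a b, |S.T^[n] p - S.T^[n] q| = Real.exp (-S.birkhoff S.phi n y) * |p - q| := by
  wlog hpq : p ≤ q generalizing p q
  · obtain ⟨y, hy, h⟩ := this hq hp (le_of_not_ge hpq)
    exact ⟨y, hy, by rw [abs_sub_comm, h, abs_sub_comm]⟩
  rcases hpq.eq_or_lt with rfl | hlt
  · exact ⟨p, hp, by simp⟩
  have hsub : Icc p q ⊆ Icc a b := Icc_subset_Icc hp.1 hq.2
  choose! d hd hd' using fun y (hy : y ∈ Icc p q) =>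
    exists_hasDerivWithinAt_iterate (A := Icc p q) n (fun z hz => hA z (hsub hz)) hy
  obtain ⟨c, hc, h⟩ := exists_hasDerivAt_eq_slope (S.T^[n]) d hlt
    (fun y hy => (hd y hy).continuousWithinAt)
    (fun y hy => (hd y (Ioo_subset_Icc_self hy)).hasDerivAt (Icc_mem_nhds hy.1 hy.2))
  have hcI := Ioo_subset_Icc_self hc
  refine ⟨c, hsub hcI, ?_⟩
  have hne : q - p ≠ 0 := by linarith
  rw [← hd' c hcI, abs_sub_comm, abs_sub_comm p q, ← abs_mul, h, div_mul_cancel₀ _ hne]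

lemma expand {j : Fin S.k} {p q : ℝ} (hp : p ∈ Icc (S.u j) (S.v j))
    (hq : q ∈ Icc (S.u j) (S.v j)) : S.lam * |p - q| ≤ |S.T p - S.T q| := by
  have hA : ∀ y ∈ Icc (S.u j) (S.v j), ∀ m < 1, S.T^[m] y ∈ S.domain := by
    intro y hy m hm
    obtain rfl : m = 0 := by omega
    exact mem_domain hy
  obtain ⟨y, hy, h⟩ := exists_mvt 1 hA hp hq
  have h2 : S.birkhoff S.phi 1 y = S.phi y := by simp [birkhoff]
  rw [h2, exp_neg_phi (mem_domain hy)] at h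
  simp only [Function.iterate_one] at h
  rw [h]
  exact mul_le_mul_of_nonneg_right (S.expanding y (mem_domain hy)) (abs_nonneg _)

/-! ### Cylinders and inverse branches -/

lemma exists_inverse_one (j : Fin S.k) :
    ∃ g : ℝ → ℝ, ContinuousOn g (Icc 0 1) ∧
      (∀ y ∈ Icc (0:ℝ) 1, g y ∈ Icc (S.u j) (S.v j) ∧ S.T (g y) = y) ∧
      ∀ x ∈ Icc (S.u j) (S.v j), g (S.T x) = x := by
  have hb := S.bijOn j
  choose! g hg hg' using fun y (hy : y ∈ Icc (0:ℝ) 1) => hb.surjOn hy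
  have hl := S.one_lt_lam
  refine ⟨g, ?_, fun y hy => ⟨hg y hy, hg' y hy⟩, fun x hx => ?_⟩
  · have : LipschitzOnWith 1 g (Icc 0 1) := by
      refine LipschitzOnWith.of_dist_le_mul fun x hx y hy => ?_
      have h := expand (hg x hx) (hg y hy)
      rw [hg' x hx, hg' y hy] at h
      rw [Real.dist_eq, Real.dist_eq, NNReal.coe_one, one_mul]
      nlinarith [abs_nonneg (g x - g y)]
    exact this.continuousOn
  · exact hb.injOn (hg _ (hb.mapsTo hx)) hx (hg' _ (hb.mapsTo hx))

lemma exists_inverse_branch (w : ℕ → Fin S.k) (n : ℕ) :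
    ∃ G : ℝ → ℝ, ContinuousOn G (Icc 0 1) ∧
      (∀ y ∈ Icc (0:ℝ) 1, G y ∈ S.cyl w n ∧ S.T^[n] (G y) = y) ∧
      ∀ x ∈ S.cyl w n, S.T^[n] x ∈ Icc (0:ℝ) 1 ∧ G (S.T^[n] x) = x := by
  induction n with
  | zero =>
    exact ⟨id, continuousOn_id, fun y hy => ⟨⟨hy, fun m hm => by omega⟩, rfl⟩,
      fun x hx => ⟨hx.1, rfl⟩⟩
  | succ n ih =>
    obtain ⟨G, hGc, hG, hG'⟩ := ih
    obtain ⟨g, hgc, hg, hg'⟩ := exists_inverse_one (w n)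
    have hmaps : ∀ y ∈ Icc (0:ℝ) 1, g y ∈ Icc (0:ℝ) 1 := fun y hy =>
      S.subset_unit _ (hg y hy).1
    refine ⟨G ∘ g, hGc.comp hgc hmaps, fun y hy => ?_, fun x hx => ?_⟩
    · obtain ⟨h1, h2⟩ := hG (g y) (hmaps y hy)
      refine ⟨⟨h1.1, fun m hm => ?_⟩, ?_⟩
      · rcases Nat.lt_succ_iff_lt_or_eq.1 hm with hm | rfl
        · exact h1.2 m hm
        · rw [Function.comp_apply, h2]
          exact (hg y hy).1
      · rw [Function.iterate_succ_apply', Function.comp_apply, h2, (hg y hy).2]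
    · have hxn := hx.2 n (by omega)
      rw [Function.iterate_succ_apply', Function.comp_apply, hg' _ hxn]
      exact ⟨(S.bijOn _).mapsTo hxn, (hG' x ⟨hx.1, fun m hm => hx.2 m (by omega)⟩).2⟩

lemma cyl_eq_image {w : ℕ → Fin S.k} {n : ℕ} {G : ℝ → ℝ}
    (hG : ∀ y ∈ Icc (0:ℝ) 1, G y ∈ S.cyl w n ∧ S.T^[n] (G y) = y)
    (hG' : ∀ x ∈ S.cyl w n, S.T^[n] x ∈ Icc (0:ℝ) 1 ∧ G (S.T^[n] x) = x) :
    S.cyl w n = G '' Icc 0 1 := by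
  ext x
  constructor
  · exact fun hx => ⟨_, hG' x hx⟩
  · rintro ⟨y, hy, rfl⟩
    exact (hG y hy).1

lemma cyl_eq_Icc (w : ℕ → Fin S.k) (n : ℕ) : ∃ a b : ℝ, a ≤ b ∧ S.cyl w n = Icc a b := by
  obtain ⟨G, hGc, hG, hG'⟩ := exists_inverse_branch w n
  have h := cyl_eq_image hG hG'
  have hconn : IsConnected (S.cyl w n) := by
    rw [h]; exact (isConnected_Icc zero_le_one).image G hGc
  have hcomp : IsCompact (S.cyl w n) := by
    rw [h]; exact isCompact_Icc.image_of_continuousOn hGc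
  have he := eq_Icc_of_connected_compact hconn hcomp
  refine ⟨_, _, ?_, he⟩
  rw [he] at hconn
  exact nonempty_Icc.1 hconn.nonempty

/-- A connected set whose first `n` images stay in the domain follows a single itinerary, because
the intervals `I_j` are separated. -/
lemma subset_cyl {A : Set ℝ} (hA : IsPreconnected A) {w : ℕ → Fin S.k} {n : ℕ}
    (hn : 1 ≤ n) (hl : A ⊆ S.level n) {x : ℝ} (hx : x ∈ A)
    (hw : ∀ m < n, S.T^[m] x ∈ Icc (S.u (w m)) (S.v (w m))) : A ⊆ S.cyl w n := by
  have hcont : ∀ m ≤ n, ContinuousOn (S.T^[m]) A := by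
    intro m hm y hy
    obtain ⟨d, hd, -⟩ := exists_hasDerivWithinAt_iterate (S := S) (A := A) m
      (fun z hz i hi => hl hz i (by omega)) hy
    exact hd.continuousWithinAt
  have key : ∀ m < n, ∀ y ∈ A, S.T^[m] y ∈ Icc (S.u (w m)) (S.v (w m)) := by
    intro m hm
    have hpre := hA.image _ (hcont m hm.le)
    have hV : IsClosed (⋃ j : {j // j ≠ w m}, Icc (S.u j) (S.v j)) :=
      isClosed_iUnion_of_finite fun _ => isClosed_Icc
    have hd : Disjoint (Icc (S.u (w m)) (S.v (w m)))
        (⋃ j : {j // j ≠ w m}, Icc (S.u j) (S.v j)) :=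
      disjoint_iUnion_right.2 fun j => S.pair_disj j.2.symm
    have hcov : S.T^[m] '' A ⊆ Icc (S.u (w m)) (S.v (w m)) ∪
        ⋃ j : {j // j ≠ w m}, Icc (S.u j) (S.v j) := by
      rintro _ ⟨y, hy, rfl⟩
      obtain ⟨j, hj⟩ := mem_iUnion.1 (hl hy m hm)
      by_cases hjw : j = w m
      · subst hjw; exact Or.inl hj
      · exact Or.inr (mem_iUnion.2 ⟨⟨j, hjw⟩, hj⟩)
    rcases isPreconnected_iff_subset_of_disjoint_closed.1 hpre _ _ isClosed_Icc hV hcov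
      (by rw [hd.inter_eq, inter_empty]) with h | h
    · exact fun y hy => h (mem_image_of_mem _ hy)
    · exact absurd (h (mem_image_of_mem _ hx)) (disjoint_left.1 hd (hw m hm))
  exact fun y hy => ⟨S.subset_unit _ (key 0 (by omega) y hy), fun m hm => key m hm y hy⟩

lemma cyl_subset_level (w : ℕ → Fin S.k) (n : ℕ) : S.cyl w n ⊆ S.level n :=
  fun _ hy m hm => mem_domain (hy.2 m hm)

lemma basic_eq_cyl {n : ℕ} (hn : 1 ≤ n) {I : Set ℝ} (hI : S.IsBasic n I) :
    ∃ w : ℕ → Fin S.k, I = S.cyl w n := by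
  obtain ⟨x, hx, rfl⟩ := hI
  have : Nonempty (Fin S.k) := ⟨⟨0, by have := S.two_le_k; omega⟩⟩
  choose! w hw using fun m (hm : m < n) => mem_iUnion.1 (hx m hm)
  refine ⟨w, subset_antisymm ?_ ?_⟩
  · exact subset_cyl isPreconnected_connectedComponentIn hn (connectedComponentIn_subset _ _)
      (mem_connectedComponentIn hx) hw
  · obtain ⟨a, b, -, hab⟩ := cyl_eq_Icc w n
    refine IsPreconnected.subset_connectedComponentIn ?_ ⟨S.subset_unit _ (hw 0 (by omega)), hw⟩
      (cyl_subset_level w n)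
    rw [hab]; exact isPreconnected_Icc

/-! ### Bounded distortion -/

lemma phi_holder {x y : ℝ} (hx : x ∈ S.domain) (hy : y ∈ S.domain) :
    |S.phi x - S.phi y| ≤ S.Ceps * |x - y| ^ S.eps := by
  wlog h : |S.T' x| ≤ |S.T' y| generalizing x y
  · rw [abs_sub_comm, abs_sub_comm x y]
    exact this hy hx (le_of_not_ge h)
  have h1 := S.one_lt_lam
  have hx1 := S.expanding x hx
  have hy1 := S.expanding y hy
  have hx0 : 0 < |S.T' x| := by linarith
  have hy0 : 0 < |S.T' y| := by linarith
  have hH := S.holder x hx y hy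
  have hlog : Real.log |S.T' y| - Real.log |S.T' x| ≤ |S.T' y| - |S.T' x| := by
    rw [← Real.log_div hy0.ne' hx0.ne']
    refine (Real.log_le_sub_one_of_pos (by positivity)).trans ?_
    rw [div_sub_one hx0.ne']
    exact div_le_self (by linarith) (by linarith)
  have hmono := Real.log_le_log hx0 h
  have htri : |S.T' y| - |S.T' x| ≤ |S.T' x - S.T' y| := by
    rw [abs_sub_comm]; exact abs_sub_abs_le_abs_sub _ _
  rw [phi, phi, abs_of_nonneg (by linarith)]
  linarith

lemma expand_iterate {w : ℕ → Fin S.k} {n : ℕ} {p q : ℝ} (hp : p ∈ S.cyl w n)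
    (hq : q ∈ S.cyl w n) {i j : ℕ} (hij : i + j ≤ n) :
    S.lam ^ j * |S.T^[i] p - S.T^[i] q| ≤ |S.T^[i + j] p - S.T^[i + j] q| := by
  have h1 := S.one_lt_lam
  induction j with
  | zero => simp
  | succ j ih =>
    have h := expand (hp.2 (i + j) (by omega)) (hq.2 (i + j) (by omega))
    rw [← add_assoc, Function.iterate_succ_apply', Function.iterate_succ_apply']
    calc S.lam ^ (j + 1) * |S.T^[i] p - S.T^[i] q|
        = S.lam * (S.lam ^ j * |S.T^[i] p - S.T^[i] q|) := by ring
      _ ≤ S.lam * |S.T^[i + j] p - S.T^[i + j] q| :=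
        mul_le_mul_of_nonneg_left (ih (by omega)) (by linarith)
      _ ≤ _ := h

/-- The oscillation of `φⁿ` on a cylinder of length `n` is bounded uniformly in `n`: the `i`-th
iterates are at distance at most `λ^{-(n-i)}`, so the Hölder bounds sum to a geometric series. -/
lemma distortion (S : CookieCutter) : ∃ L : ℝ, ∀ (w : ℕ → Fin S.k) (n : ℕ),
    ∀ p ∈ S.cyl w n, ∀ q ∈ S.cyl w n,
      |S.birkhoff S.phi n p - S.birkhoff S.phi n q| ≤ L := by
  have h1 := S.one_lt_lam
  have h0 : 0 < S.lam := by linarith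
  set r : ℝ := S.lam⁻¹ ^ S.eps with hr
  have hr0 : 0 ≤ r := by positivity
  have hr1 : r < 1 := Real.rpow_lt_one (by positivity) (inv_lt_one_of_one_lt₀ h1) S.eps_pos
  refine ⟨S.Ceps * (1 - r)⁻¹, fun w n p hp q hq => ?_⟩
  obtain ⟨G, -, -, hG'⟩ := exists_inverse_branch w n
  have hend : |S.T^[n] p - S.T^[n] q| ≤ 1 := by
    have ha := (hG' p hp).1
    have hb := (hG' q hq).1
    rw [abs_le]; constructor <;> linarith [ha.1, ha.2, hb.1, hb.2]
  have hterm : ∀ i ∈ Finset.range n,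
      |S.phi (S.T^[i] p) - S.phi (S.T^[i] q)| ≤ S.Ceps * r ^ (n - 1 - i) := by
    intro i hi
    rw [Finset.mem_range] at hi
    refine (phi_holder (mem_domain (hp.2 i hi)) (mem_domain (hq.2 i hi))).trans ?_
    refine mul_le_mul_of_nonneg_left ?_ S.Ceps_nonneg
    -- one factor of `λ⁻¹` is given away so that the exponents match `Finset.sum_range_reflect`
    have he := expand_iterate hp hq (i := i) (j := n - 1 - i) (by omega)
    have he2 := expand_iterate hp hq (i := i + (n - 1 - i)) (j := 1) (by omega)
    rw [show i + (n - 1 - i) + 1 = n by omega] at he2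
    have hd : |S.T^[i] p - S.T^[i] q| ≤ S.lam⁻¹ ^ (n - 1 - i) := by
      rw [inv_pow, ← one_div, le_div_iff₀ (by positivity), mul_comm]
      nlinarith [abs_nonneg (S.T^[i + (n - 1 - i)] p - S.T^[i + (n - 1 - i)] q)]
    calc |S.T^[i] p - S.T^[i] q| ^ S.eps ≤ (S.lam⁻¹ ^ (n - 1 - i)) ^ S.eps :=
          Real.rpow_le_rpow (abs_nonneg _) hd S.eps_pos.le
      _ = r ^ (n - 1 - i) := by
          rw [hr, ← Real.rpow_natCast, ← Real.rpow_natCast, ← Real.rpow_mul (by positivity),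
            ← Real.rpow_mul (by positivity), mul_comm]
  rw [birkhoff, birkhoff, ← Finset.sum_sub_distrib]
  calc |∑ i ∈ Finset.range n, (S.phi (S.T^[i] p) - S.phi (S.T^[i] q))|
      ≤ ∑ i ∈ Finset.range n, S.Ceps * r ^ (n - 1 - i) :=
        (Finset.abs_sum_le_sum_abs _ _).trans (Finset.sum_le_sum hterm)
    _ = S.Ceps * ∑ i ∈ Finset.range n, r ^ i := by
        rw [← Finset.mul_sum, Finset.sum_range_reflect (fun i => r ^ i) n]
    _ ≤ S.Ceps * (1 - r)⁻¹ := by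
        refine mul_le_mul_of_nonneg_left ?_ S.Ceps_nonneg
        rw [← tsum_geometric_of_lt_one hr0 hr1]
        exact (summable_geometric_of_lt_one hr0 hr1).sum_le_tsum _
          (fun i _ => pow_nonneg hr0 i)

/-- Each basic set of level `n` contains a point of period `n`, at which `e^{φⁿ}` is comparable
to the length of the basic set. -/
lemma basic_geometry (S : CookieCutter) : ∃ L : ℝ, ∀ n, 1 ≤ n → ∀ I, S.IsBasic n I →
    ∃ x ∈ I ∩ S.repeller, S.T^[n] x = x ∧
      Real.exp (S.birkhoff S.phi n x - L) ≤ setLen I ∧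
      setLen I ≤ Real.exp (S.birkhoff S.phi n x + L) := by
  obtain ⟨L, hL⟩ := distortion S
  refine ⟨L, fun n hn I hI => ?_⟩
  obtain ⟨w, rfl⟩ := basic_eq_cyl hn hI
  obtain ⟨G, hGc, hG, hG'⟩ := exists_inverse_branch w n
  obtain ⟨a, b, hab, hIcc⟩ := cyl_eq_Icc w n
  obtain ⟨x, hx, hfix⟩ := exists_mem_Icc_isFixedPt_of_mapsTo hGc zero_le_one
    (fun y hy => (hG y hy).1.1)
  have hxI : x ∈ S.cyl w n := by
    have h := (hG x hx).1
    rwa [hfix.eq] at h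
  have hper : S.T^[n] x = x := by
    have h := (hG x hx).2
    rwa [hfix.eq] at h
  have hrep : x ∈ S.repeller := by
    intro m
    rw [← Function.IsPeriodicPt.iterate_mod_apply (show Function.IsPeriodicPt S.T n x from hper) m]
    exact mem_domain (hxI.2 _ (Nat.mod_lt _ hn))
  have hA : ∀ y ∈ Icc a b, ∀ m < n, S.T^[m] y ∈ S.domain := by
    rw [← hIcc]
    exact fun y hy => cyl_subset_level w n hy
  have hlen : setLen (S.cyl w n) = b - a := by
    rw [hIcc, setLen, csSup_Icc hab, csInf_Icc hab]
  refine ⟨x, ⟨hxI, hrep⟩, hper, ?_, ?_⟩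
  · -- the preimages of `0` and `1` are separated by the derivative bound
    obtain ⟨hp, hp'⟩ := hG 0 (by simp)
    obtain ⟨hq, hq'⟩ := hG 1 (by simp)
    have hpI := hp
    have hqI := hq
    rw [hIcc] at hpI hqI
    obtain ⟨y, hy, h⟩ := exists_mvt n hA hqI hpI
    rw [hp', hq', Real.exp_neg] at h
    have hdist := hL w n y (hIcc ▸ hy) x hxI
    have hpq : |G 1 - G 0| ≤ b - a := by
      rw [abs_le]; constructor <;> linarith [hpI.1, hpI.2, hqI.1, hqI.2]
    have hE := Real.exp_pos (S.birkhoff S.phi n y)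
    have h2 : |G 1 - G 0| = Real.exp (S.birkhoff S.phi n y) := by
      rw [sub_zero, abs_one] at h
      field_simp at h
      exact h.symm
    rw [hlen]
    calc Real.exp (S.birkhoff S.phi n x - L) ≤ Real.exp (S.birkhoff S.phi n y) :=
          Real.exp_le_exp.2 (by linarith [(abs_le.1 hdist).1])
      _ ≤ b - a := h2 ▸ hpq
  · obtain ⟨y, hy, h⟩ := exists_mvt n hA (right_mem_Icc.2 hab) (left_mem_Icc.2 hab)
    have ha := (hG' a (hIcc ▸ left_mem_Icc.2 hab)).1
    have hb := (hG' b (hIcc ▸ right_mem_Icc.2 hab)).1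
    have hle : |S.T^[n] b - S.T^[n] a| ≤ 1 := by
      rw [abs_le]; constructor <;> linarith [ha.1, ha.2, hb.1, hb.2]
    have hdist := hL w n y (hIcc ▸ hy) x hxI
    rw [h, abs_of_nonneg (sub_nonneg.2 hab), Real.exp_neg] at hle
    have hE := Real.exp_pos (S.birkhoff S.phi n y)
    rw [inv_mul_le_iff₀ hE, mul_one] at hle
    rw [hlen]
    exact hle.trans (Real.exp_le_exp.2 (by linarith [(abs_le.1 hdist).2]))

/-! ### Periodic orbit measures -/

/-- The uniform probability measure on the first `n` points of the orbit of `x`. -/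
noncomputable def orbitMeasure (S : CookieCutter) (n : ℕ) (x : ℝ) : Measure ℝ :=
  (n : ENNReal)⁻¹ • ∑ j ∈ Finset.range n, Measure.dirac (S.T^[j] x)

/-- Since `T` is an arbitrary function off the domain, `T ⁻¹' A` need not be measurable; the
formula for Dirac masses on all subsets of `ℝ` is used instead. -/
lemma orbitMeasure_invariant {n : ℕ} (hn : 1 ≤ n) {x : ℝ} (hx : x ∈ S.repeller)
    (hper : S.T^[n] x = x) : S.IsInvariantProb (S.orbitMeasure n x) := by
  refine ⟨⟨?_⟩, ?_, fun A _ => ?_⟩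
  · simp only [orbitMeasure, Measure.smul_apply, Measure.finsetSum_apply, measure_univ,
      Finset.sum_const, Finset.card_range, smul_eq_mul, nsmul_eq_mul, mul_one]
    exact ENNReal.inv_mul_cancel (by simp; omega) (ENNReal.natCast_ne_top n)
  · simp only [orbitMeasure, Measure.smul_apply, Measure.finsetSum_apply, smul_eq_mul]
    rw [Finset.sum_eq_zero, mul_zero]
    intro j _
    rw [Measure.dirac_apply, indicator_of_notMem]
    intro h
    refine h fun m => ?_
    rw [← Function.iterate_add_apply]
    exact hx _
  · simp only [orbitMeasure, Measure.smul_apply, Measure.finsetSum_apply, smul_eq_mul]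
    congr 1
    set F : ℕ → ENNReal := fun j => Measure.dirac (S.T^[j] x) A with hF
    have h1 : ∀ j, Measure.dirac (S.T^[j] x) (S.T ⁻¹' A) = F (j + 1) := by
      intro j
      simp only [hF, Measure.dirac_apply, Function.iterate_succ_apply']
      rfl
    have h2 : F n = F 0 := by simp only [hF, hper, Function.iterate_zero, id]
    obtain ⟨m, rfl⟩ : ∃ m, n = m + 1 := ⟨n - 1, by omega⟩
    simp only [h1]
    rw [Finset.sum_range_succ, Finset.sum_range_succ', h2]

lemma integral_orbitMeasure (n : ℕ) (x : ℝ) (f : ℝ → ℝ) :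
    ∫ y, f y ∂(S.orbitMeasure n x) = (n : ℝ)⁻¹ * S.birkhoff f n x := by
  rw [orbitMeasure, integral_smul_measure, integral_finsetSum_measure]
  · simp [birkhoff, integral_dirac]
  · exact fun j _ => integrable_dirac (by simp)

lemma birkhoff_sub_mul (ψ φ : ℝ → ℝ) (α : ℝ) (n : ℕ) (x : ℝ) :
    S.birkhoff (fun y => ψ y - α * φ y) n x = S.birkhoff ψ n x - α * S.birkhoff φ n x := by
  simp only [birkhoff, Finset.sum_sub_distrib, Finset.mul_sum]

end CookieCutter

/-- If every `T`-invariant probability measure `ν` satisfies `∫ (ψ - αφ) dν ≥ 0`,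
then for all sufficiently small `b > 0` no basic set satisfies `μ(I) ≤ b|I|^α`
(so the multifractal zeta function vanishes identically); symmetrically, if
`∫ (ψ - αφ) dν ≤ 0` for all invariant `ν`, then for all sufficiently large `a`
no basic set satisfies `a|I|^α ≤ μ(I)`. -/
theorem zeta_vanishes_at_endpoint (S : CookieCutter) (ψ : ℝ → ℝ)
    (hψ : CookieCutter.IsHolderOn ψ S.repeller)
    (μ : Measure ℝ) (hμ : S.IsGibbs ψ μ) (α : ℝ) (hα : 0 ≤ α) :
    ((∀ ν : Measure ℝ, S.IsInvariantProb ν →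
        0 ≤ ∫ x, (ψ x - α * S.phi x) ∂ν) →
      ∃ b₀ : ℝ, 0 < b₀ ∧ ∀ b : ℝ, 0 < b → b ≤ b₀ →
        ∀ n, 1 ≤ n → ∀ I, S.IsBasic n I → ¬ (μ I).toReal ≤ b * setLen I ^ α) ∧
    ((∀ ν : Measure ℝ, S.IsInvariantProb ν →
        (∫ x, (ψ x - α * S.phi x) ∂ν) ≤ 0) →
      ∃ a₀ : ℝ, 0 < a₀ ∧ ∀ a : ℝ, a₀ ≤ a →
        ∀ n, 1 ≤ n → ∀ I, S.IsBasic n I → ¬ a * setLen I ^ α ≤ (μ I).toReal) := by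
  obtain ⟨-, -, C, D, hC, hD, hG⟩ := hμ
  obtain ⟨L, hL⟩ := CookieCutter.basic_geometry S
  constructor
  · intro hν
    refine ⟨C * Real.exp (-(α * L)) / 2, by positivity, fun b hb hb' n hn I hI hle => ?_⟩
    obtain ⟨x, hx, hper, hlo, hup⟩ := hL n hn I hI
    have hinv := hν _ (CookieCutter.orbitMeasure_invariant hn hx.2 hper)
    have hn0 : (0:ℝ) < (n:ℝ)⁻¹ := by positivity
    rw [CookieCutter.integral_orbitMeasure, CookieCutter.birkhoff_sub_mul,
      mul_nonneg_iff_of_pos_left hn0] at hinv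
    have hlen0 : 0 ≤ setLen I := (Real.exp_pos _).le.trans hlo
    have hpow : setLen I ^ α ≤ Real.exp (S.birkhoff ψ n x) * Real.exp (α * L) := by
      refine (Real.rpow_le_rpow hlen0 hup hα).trans ?_
      rw [← Real.exp_mul, ← Real.exp_add, Real.exp_le_exp]
      linarith
    have hcancel : Real.exp (-(α * L)) * Real.exp (α * L) = 1 := by
      rw [← Real.exp_add]; simp
    have hge := (hG n hn I hI x hx).1
    have hE := Real.exp_pos (S.birkhoff ψ n x)
    have : b * setLen I ^ α ≤ C / 2 * Real.exp (S.birkhoff ψ n x) := by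
      calc b * setLen I ^ α ≤ (C * Real.exp (-(α * L)) / 2) *
            (Real.exp (S.birkhoff ψ n x) * Real.exp (α * L)) :=
            mul_le_mul hb' hpow (Real.rpow_nonneg hlen0 _) (by positivity)
        _ = C / 2 * Real.exp (S.birkhoff ψ n x) *
            (Real.exp (-(α * L)) * Real.exp (α * L)) := by ring
        _ = _ := by rw [hcancel, mul_one]
    nlinarith
  · intro hν
    refine ⟨2 * D * Real.exp (α * L), by positivity, fun a ha n hn I hI hle => ?_⟩
    obtain ⟨x, hx, hper, hlo, hup⟩ := hL n hn I hI
    have hinv := hν _ (CookieCutter.orbitMeasure_invariant hn hx.2 hper)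
    have hn0 : (0:ℝ) < (n:ℝ)⁻¹ := by positivity
    rw [CookieCutter.integral_orbitMeasure, CookieCutter.birkhoff_sub_mul] at hinv
    replace hinv := le_of_mul_le_mul_left (hinv.trans_eq (mul_zero _).symm) hn0
    have hpow : Real.exp (S.birkhoff ψ n x) * Real.exp (-(α * L)) ≤ setLen I ^ α := by
      refine le_trans ?_ (Real.rpow_le_rpow (Real.exp_pos _).le hlo hα)
      rw [← Real.exp_mul, ← Real.exp_add, Real.exp_le_exp]
      linarith
    have hcancel : Real.exp (α * L) * Real.exp (-(α * L)) = 1 := by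
      rw [← Real.exp_add]; simp
    have hge := (hG n hn I hI x hx).2
    have hE := Real.exp_pos (S.birkhoff ψ n x)
    have ha0 : 0 ≤ a := le_trans (by positivity) ha
    have : 2 * D * Real.exp (S.birkhoff ψ n x) ≤ a * setLen I ^ α := by
      calc 2 * D * Real.exp (S.birkhoff ψ n x)
          = 2 * D * Real.exp (S.birkhoff ψ n x) *
            (Real.exp (α * L) * Real.exp (-(α * L))) := by rw [hcancel, mul_one]
        _ = (2 * D * Real.exp (α * L)) *
            (Real.exp (S.birkhoff ψ n x) * Real.exp (-(α * L))) := by ring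
        _ ≤ _ := mul_le_mul ha hpow (by positivity) ha0
    nlinarith
end
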